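/- Under the stochastic wide-range Hedge setup, with probability at least 1 − p† the following holds simultaneously for all b ∈ B^s and all swap modifications ψ ∈ Ψ^s: ∑_{t=1}^T M^t_b·(⟨p^t, ℓ̃^t_b⟩ − ⟨ψ∘p^t, ℓ̃^t_b⟩) ≤ η·L̄·∑_{t=1}^T M^t_b·⟨p^t, ℓ̃^t_b⟩ + log((|B^s| + |B^e|)·A^A / p†)/(η·w_b). -/

import Mathlib

/-!
The total weight `Φ_t = ∑_{(b,ψ) ∈ ℐ} w^t(b,ψ)` is a supermartingale. For scaled losses
`x, y ∈ [0, L̄]`, convexity of `exp` gives the linear bound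
`exp (η (exp (-η L̄) x - y)) ≤ 1 + (1 - exp (-η L̄)) / L̄ * (x - y)` (`exp_linear_bound`), so `Φ_t` is
at most `Φ_{t-1}` plus a term linear in the estimated losses. Integrating that term replaces every
`ℓ̃_b` by the common conditional mean `ℓ`, after which the stationarity equation makes it vanish
(`integral_step_le`).

Hence `E Φ_T ≤ Φ_0 = (|B^s| + |B^e|) A^(A+1)`, and Markov's inequality gives
`Φ_T < Φ_0 / p†` with probability at least `1 - p†`. On that event each single weight
`A * exp (…)` with `b ∈ B^s` is below `Φ_0 / p†`; taking logarithms and using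
`1 - η L̄ ≤ exp (-η L̄)` is the claimed bound.
-/

open Finset MeasureTheory

/-- Pushforward of a vector `p` on `Fin A` under a map `ψ : Fin A → Fin A`:
`(ψ∘p)(a) = ∑_{a' : ψ(a') = a} p(a')`. -/
def pushf {A : ℕ} (ψ : Fin A → Fin A) (p : Fin A → ℝ) : Fin A → ℝ :=
  fun a => ∑ a' ∈ Finset.univ.filter (fun a' => ψ a' = a), p a'

/-- Standard inner product on `ℝ^A`. -/
def ip {A : ℕ} (p ℓ : Fin A → ℝ) : ℝ := ∑ a, p a * ℓ a

/-- The set `Ψ^e` of external (constant) modifications on `Fin A`. -/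
def PsiE (A : ℕ) : Finset (Fin A → Fin A) :=
  Finset.univ.image fun a => Function.const (Fin A) a

/-! ### Pushforwards and averages -/

lemma ip_pushf {A : ℕ} (ψ : Fin A → Fin A) (p v : Fin A → ℝ) :
    ip (pushf ψ p) v = ∑ a, p a * v (ψ a) := by
  unfold ip pushf
  rw [← Finset.sum_fiberwise (s := Finset.univ) (g := ψ) (f := fun a => p a * v (ψ a))]
  refine Finset.sum_congr rfl fun a _ => ?_
  rw [Finset.sum_mul]
  refine Finset.sum_congr rfl fun a' ha' => ?_
  rw [(Finset.mem_filter.mp ha').2]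

lemma ip_smul {A : ℕ} (p v : Fin A → ℝ) (S : ℝ) :
    ip p (fun a => S * v a) = S * ip p v := by
  unfold ip
  rw [Finset.mul_sum]
  exact Finset.sum_congr rfl fun a _ => by ring

lemma avg_mem_Icc {A : ℕ} {p : Fin A → ℝ} (hp : (∀ a, 0 ≤ p a) ∧ ∑ a, p a = 1)
    {v : Fin A → ℝ} {L : ℝ} (h0 : ∀ a, 0 ≤ v a) (h1 : ∀ a, v a ≤ L) (ψ : Fin A → Fin A) :
    0 ≤ ip (pushf ψ p) v ∧ ip (pushf ψ p) v ≤ L := by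
  rw [ip_pushf]
  refine ⟨Finset.sum_nonneg fun a _ => mul_nonneg (hp.1 a) (h0 _), ?_⟩
  calc ∑ a, p a * v (ψ a) ≤ ∑ a, p a * L :=
        Finset.sum_le_sum fun a _ => mul_le_mul_of_nonneg_left (h1 _) (hp.1 a)
    _ = L := by rw [← Finset.sum_mul, hp.2, one_mul]

lemma pushf_id {A : ℕ} (p : Fin A → ℝ) : pushf id p = p := by
  funext a
  simp [pushf, Finset.filter_eq']

lemma pushf_mem_Icc {A : ℕ} {p : Fin A → ℝ} (hp : (∀ a, 0 ≤ p a) ∧ ∑ a, p a = 1)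
    (ψ : Fin A → Fin A) (a : Fin A) : 0 ≤ pushf ψ p a ∧ pushf ψ p a ≤ 1 := by
  unfold pushf
  refine ⟨Finset.sum_nonneg fun a _ => hp.1 a, ?_⟩
  rw [← hp.2]
  exact Finset.sum_le_sum_of_subset_of_nonneg (Finset.filter_subset _ _) fun a _ _ => hp.1 a

/-! ### The exponential inequality -/

/-- The chord of `exp` over the segment from `0` to `k` lies above the graph. -/
lemma exp_mul_le_chord {z : ℝ} (h0 : 0 ≤ z) (h1 : z ≤ 1) (k : ℝ) :
    Real.exp (z * k) ≤ 1 + z * (Real.exp k - 1) := by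
  have h := convexOn_exp.2 (Set.mem_univ (0 : ℝ)) (Set.mem_univ k)
    (sub_nonneg.mpr h1) h0 (by ring)
  simp only [smul_eq_mul, mul_zero, zero_add, Real.exp_zero, mul_one] at h
  linarith

/-- The linear upper bound on the exponential update factor. -/
lemma exp_linear_bound {η L x y : ℝ} (hη : 0 < η) (hL : 0 < L) (hx0 : 0 ≤ x) (hxL : x ≤ L)
    (hy0 : 0 ≤ y) (hyL : y ≤ L) :
    Real.exp (η * (Real.exp (-η * L) * x - y))
      ≤ 1 + (1 - Real.exp (-η * L)) / L * (x - y) := by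
  set β := Real.exp (-η * L) with hβ
  have hβ0 : 0 < β := Real.exp_pos _
  have hβ1 : β ≤ 1 := Real.exp_le_one_iff.mpr (by nlinarith)
  have hinv : Real.exp (η * L) * β = 1 := by
    rw [hβ, ← Real.exp_add, show η * L + -η * L = 0 by ring, Real.exp_zero]
  have e1 : Real.exp (η * (β * x)) ≤ 1 + (1 - β) / L * x := by
    -- interpolate between `0` and `η L` with ratio `β x / L`
    have h := exp_mul_le_chord (z := β * x / L) (by positivity)
      ((div_le_one hL).mpr (by nlinarith)) (η * L)
    rw [show β * x / L * (η * L) = η * (β * x) by field_simp] at h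
    refine h.trans (le_of_eq ?_)
    rw [show β * x / L * (Real.exp (η * L) - 1)
      = (Real.exp (η * L) * β - β) / L * x by ring, hinv]
  have e2 : Real.exp (-(η * y)) ≤ 1 - (1 - β) / L * y := by
    have h := exp_mul_le_chord (z := y / L) (by positivity) ((div_le_one hL).mpr hyL) (-η * L)
    rw [show y / L * (-η * L) = -(η * y) by field_simp, ← hβ] at h
    refine h.trans (le_of_eq ?_)
    ring
  have hc : 0 ≤ (1 - β) / L := div_nonneg (by linarith) hL.le
  have hu : 0 ≤ (1 - β) / L * x := mul_nonneg hc hx0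
  have hv : 0 ≤ (1 - β) / L * y := mul_nonneg hc hy0
  calc Real.exp (η * (β * x - y)) = Real.exp (η * (β * x)) * Real.exp (-(η * y)) := by
        rw [← Real.exp_add]; ring_nf
    _ ≤ (1 + (1 - β) / L * x) * (1 - (1 - β) / L * y) :=
        mul_le_mul e1 e2 (Real.exp_pos _).le (by linarith)
    _ ≤ 1 + (1 - β) / L * (x - y) := by nlinarith [mul_nonneg hu hv]

/-! ### The supermartingale step -/

lemma integrable_of_ae_mem_Icc {Ω : Type} [MeasurableSpace Ω] {μ : Measure Ω}
    [IsFiniteMeasure μ] {f : Ω → ℝ} (hf : Measurable f) {C : ℝ}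
    (h : ∀ᵐ ω ∂μ, 0 ≤ f ω ∧ f ω ≤ C) : Integrable f μ := by
  refine Integrable.of_bound hf.aestronglyMeasurable C ?_
  filter_upwards [h] with ω hω
  rw [Real.norm_eq_abs, abs_of_nonneg hω.1]
  exact hω.2

/-- A bounded predictable multiplier lets an integrable factor be replaced by any version of its
conditional expectation. -/
lemma integral_mul_condExp_version {Ω : Type} {m mΩ : MeasurableSpace Ω} {μ : Measure Ω}
    [IsProbabilityMeasure μ] (hm : m ≤ mΩ) {g f k : Ω → ℝ} (hg : Measurable[m] g) {C : ℝ}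
    (hgC : ∀ᵐ ω ∂μ, ‖g ω‖ ≤ C) (hf : Integrable f μ) (hk : μ[f|m] =ᵐ[μ] k) :
    Integrable (fun ω => g ω * f ω) μ ∧ Integrable (fun ω => g ω * k ω) μ ∧
      ∫ ω, g ω * f ω ∂μ = ∫ ω, g ω * k ω ∂μ := by
  have hgs : AEStronglyMeasurable g μ := (hg.mono hm le_rfl).aestronglyMeasurable
  have h1 : Integrable (fun ω => g ω * f ω) μ := hf.bdd_mul hgs hgC
  have hki : Integrable k μ := integrable_condExp.congr hk
  refine ⟨h1, hki.bdd_mul hgs hgC, ?_⟩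
  rw [← integral_condExp hm]
  refine integral_congr_ae ?_
  have := condExp_mul_of_stronglyMeasurable_left (μ := μ) hg.stronglyMeasurable h1 hf
  filter_upwards [this, hk] with ω h2 h3
  rw [← h3]
  exact h2

/-- One round does not increase the expected total weight. Here `V` are the current weights,
`f i = S_i · ℓ̃_i` the scaled loss estimates, and `m` the past. -/
lemma integral_step_le {Ω ι : Type} {A : ℕ} {m mΩ : MeasurableSpace Ω} {μ : Measure Ω}
    [IsProbabilityMeasure μ] (hm : m ≤ mΩ) (I : Finset ι) {η L C : ℝ} (hη : 0 < η) (hL : 0 < L)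
    (V V' : ι → Ω → ℝ) (hV : ∀ i ∈ I, Measurable[m] (V i))
    (hVC : ∀ i ∈ I, ∀ᵐ ω ∂μ, 0 ≤ V i ω ∧ V i ω ≤ C)
    (f : ι → Ω → Fin A → ℝ) (hf : ∀ i ∈ I, ∀ a, Measurable (fun ω => f i ω a))
    (hfL : ∀ i ∈ I, ∀ a, ∀ᵐ ω ∂μ, 0 ≤ f i ω a ∧ f i ω a ≤ L)
    (p : Ω → Fin A → ℝ) (hpm : ∀ a, Measurable[m] fun ω => p ω a)
    (hp : ∀ ω, (∀ a, 0 ≤ p ω a) ∧ ∑ a, p ω a = 1)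
    (ψ : ι → Fin A → Fin A) (S : ι → ℝ) (ℓ : Ω → Fin A → ℝ)
    (hcond : ∀ i ∈ I, ∀ a, μ[(fun ω => f i ω a)|m] =ᵐ[μ] fun ω => S i * ℓ ω a)
    (hstat : ∀ᵐ ω ∂μ, ∀ a, ∑ i ∈ I, V i ω * S i * p ω a
      = ∑ i ∈ I, V i ω * S i * pushf (ψ i) (p ω) a)
    (hV' : ∀ i ∈ I, ∀ ω, V' i ω = V i ω * Real.exp (η * (Real.exp (-η * L) * ip (p ω) (f i ω)
      - ip (pushf (ψ i) (p ω)) (f i ω))))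
    (hV'int : ∀ i ∈ I, Integrable (V' i) μ) :
    ∫ ω, ∑ i ∈ I, V' i ω ∂μ ≤ ∫ ω, ∑ i ∈ I, V i ω ∂μ := by
  set c := (1 - Real.exp (-η * L)) / L with hc
  let g : ι → Fin A → Ω → ℝ := fun i a ω => V i ω * (p ω a - pushf (ψ i) (p ω) a)
  have hgm : ∀ i ∈ I, ∀ a, Measurable[m] (g i a) := by
    intro i hi a
    refine (hV i hi).mul ((hpm a).sub ?_)
    exact Finset.measurable_fun_sum _ fun a' _ => hpm a'
  have hgC : ∀ i ∈ I, ∀ a, ∀ᵐ ω ∂μ, ‖g i a ω‖ ≤ C := by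
    intro i hi a
    filter_upwards [hVC i hi] with ω h
    have h1 := pushf_mem_Icc (hp ω) (ψ i) a
    have h2 := pushf_mem_Icc (hp ω) id a
    rw [pushf_id] at h2
    rw [Real.norm_eq_abs, abs_mul, abs_of_nonneg h.1]
    have h3 : |p ω a - pushf (ψ i) (p ω) a| ≤ 1 := abs_le.mpr ⟨by linarith, by linarith⟩
    nlinarith [h.1, h.2]
  have hkey : ∀ i ∈ I, ∀ a, _ := fun i hi a =>
    integral_mul_condExp_version hm (hgm i hi a) (hgC i hi a)
      (integrable_of_ae_mem_Icc (hf i hi a) (hfL i hi a)) (hcond i hi a)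
  have hVint : ∀ i ∈ I, Integrable (V i) μ := fun i hi =>
    integrable_of_ae_mem_Icc ((hV i hi).mono hm le_rfl) (hVC i hi)
  have hlin_int : Integrable (fun ω => ∑ i ∈ I, ∑ a, g i a ω * f i ω a) μ :=
    integrable_finsetSum _ fun i hi => integrable_finsetSum _ fun a _ => (hkey i hi a).1
  have hlin0 : ∫ ω, ∑ i ∈ I, ∑ a, g i a ω * f i ω a ∂μ = 0 := by
    rw [integral_finsetSum _ fun i hi => integrable_finsetSum _ fun a _ => (hkey i hi a).1]
    have e1 : ∀ i ∈ I, ∫ ω, ∑ a, g i a ω * f i ω a ∂μ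
        = ∫ ω, ∑ a, g i a ω * (S i * ℓ ω a) ∂μ := by
      intro i hi
      rw [integral_finsetSum _ fun a _ => (hkey i hi a).1,
        integral_finsetSum _ fun a _ => (hkey i hi a).2.1]
      exact Finset.sum_congr rfl fun a _ => (hkey i hi a).2.2
    rw [Finset.sum_congr rfl e1,
      ← integral_finsetSum _ fun i hi => integrable_finsetSum _ fun a _ => (hkey i hi a).2.1]
    refine integral_eq_zero_of_ae ?_
    filter_upwards [hstat] with ω hω
    rw [Finset.sum_comm]
    refine Finset.sum_eq_zero fun a _ => ?_
    have h1 : ∑ i ∈ I, g i a ω * (S i * ℓ ω a) = (∑ i ∈ I, V i ω * S i * p ω a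
        - ∑ i ∈ I, V i ω * S i * pushf (ψ i) (p ω) a) * ℓ ω a := by
      rw [← Finset.sum_sub_distrib, Finset.sum_mul]
      exact Finset.sum_congr rfl fun i _ => by simp only [g]; ring
    rw [h1, hω a, sub_self, zero_mul]
  have hle : ∫ ω, ∑ i ∈ I, V' i ω ∂μ
      ≤ ∫ ω, (∑ i ∈ I, V i ω + c * ∑ i ∈ I, ∑ a, g i a ω * f i ω a) ∂μ := by
    refine integral_mono_ae (integrable_finsetSum _ hV'int)
      ((integrable_finsetSum _ hVint).add (hlin_int.const_mul c)) ?_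
    have hall1 : ∀ᵐ ω ∂μ, ∀ i ∈ I, 0 ≤ V i ω ∧ V i ω ≤ C :=
      (Finset.eventually_all I).mpr hVC
    have hall2 : ∀ᵐ ω ∂μ, ∀ i ∈ I, ∀ a, 0 ≤ f i ω a ∧ f i ω a ≤ L :=
      (Finset.eventually_all I).mpr fun i hi => ae_all_iff.mpr (hfL i hi)
    filter_upwards [hall1, hall2] with ω h1 h2
    rw [Finset.mul_sum, ← Finset.sum_add_distrib]
    refine Finset.sum_le_sum fun i hi => ?_
    have hx := avg_mem_Icc (hp ω) (fun a => (h2 i hi a).1) (fun a => (h2 i hi a).2) id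
    have hy := avg_mem_Icc (hp ω) (fun a => (h2 i hi a).1) (fun a => (h2 i hi a).2) (ψ i)
    rw [pushf_id] at hx
    have h3 := mul_le_mul_of_nonneg_left
      (exp_linear_bound hη hL hx.1 hx.2 hy.1 hy.2) (h1 i hi).1
    rw [hV' i hi]
    refine h3.trans (le_of_eq ?_)
    have h4 : ∑ a, g i a ω * f i ω a
        = V i ω * (ip (p ω) (f i ω) - ip (pushf (ψ i) (p ω)) (f i ω)) := by
      unfold ip
      rw [← Finset.sum_sub_distrib, Finset.mul_sum]
      exact Finset.sum_congr rfl fun a _ => by simp only [g]; ring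
    rw [h4]
    ring
  rwa [integral_add (integrable_finsetSum _ hVint) (hlin_int.const_mul c), integral_const_mul,
    hlin0, mul_zero, add_zero] at hle

/-! ### The high-probability bound -/

/-- High-probability wide-range regret bound of stochastic wide-range Hedge (swap part):
with probability at least `1 − p†`, simultaneously for all `b ∈ B^s` and all swap
modifications `ψ`,
`∑_t M^t_b (⟨p^t, ℓ̃^t_b⟩ − ⟨ψ∘p^t, ℓ̃^t_b⟩)
  ≤ η·L̄·∑_t M^t_b ⟨p^t, ℓ̃^t_b⟩ + log((|B^s|+|B^e|)·A^A/p†)/(η·w_b)`. -/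
theorem stmt5
    (A : ℕ) (hA : 1 ≤ A)
    (B : Type) [Fintype B] [DecidableEq B]
    (Bs Be : Finset B) (hdisj : Disjoint Bs Be)
    (hBs : Bs.Nonempty) (hBe : Be.Nonempty)
    (ℐ : Finset (B × (Fin A → Fin A)))
    (hℐ : ℐ = Bs ×ˢ (Finset.univ : Finset (Fin A → Fin A)) ∪ Be ×ˢ PsiE A)
    {Ω : Type} [mΩ : MeasurableSpace Ω] (μ : Measure Ω) [IsProbabilityMeasure μ]
    (𝔉 : Filtration ℕ mΩ)
    (T : ℕ) (hT : 1 ≤ T)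
    (M : ℕ → B → ℝ) (hM : ∀ t ∈ Finset.Icc 1 T, ∀ b ∈ Bs ∪ Be, 0 ≤ M t b)
    (wb : B → ℝ) (hwb : ∀ b ∈ Bs ∪ Be, 0 < wb b)
    (Lbar η pdag : ℝ) (hL : 0 < Lbar) (hη : 0 < η) (hpdag : 0 < pdag ∧ pdag < 1)
    (ℓt : ℕ → B → Ω → Fin A → ℝ)
    (hℓtmeas : ∀ t ∈ Finset.Icc 1 T, ∀ b ∈ Bs ∪ Be, ∀ a,
      Measurable[𝔉 t] fun ω => ℓt t b ω a)
    (hℓtnonneg : ∀ t ∈ Finset.Icc 1 T, ∀ b ∈ Bs ∪ Be, ∀ ω, ∀ a, 0 ≤ ℓt t b ω a)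
    (hbd : ∀ t ∈ Finset.Icc 1 T, ∀ b ∈ Bs ∪ Be, ∀ a : Fin A,
      ∀ᵐ ω ∂μ, (wb b * M t b) * ℓt t b ω a ≤ Lbar)
    (ℓ : ℕ → Ω → Fin A → ℝ)
    (hℓmeas : ∀ t ∈ Finset.Icc 1 T, ∀ a, Measurable[𝔉 (t - 1)] fun ω => ℓ t ω a)
    (hcond : ∀ t ∈ Finset.Icc 1 T, ∀ b ∈ Bs ∪ Be, ∀ a : Fin A,
      μ[(fun ω => ℓt t b ω a)|𝔉 (t - 1)] =ᵐ[μ] fun ω => ℓ t ω a)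
    (p : ℕ → Ω → Fin A → ℝ)
    (hpmeas : ∀ t ∈ Finset.Icc 1 T, ∀ a, Measurable[𝔉 (t - 1)] fun ω => p t ω a)
    (hpprob : ∀ t ∈ Finset.Icc 1 T, ∀ ω, (∀ a, 0 ≤ p t ω a) ∧ ∑ a, p t ω a = 1)
    (W : ℕ → Ω → B × (Fin A → Fin A) → ℝ)
    (hW : ∀ t ω, ∀ bψ : B × (Fin A → Fin A), W t ω bψ =
      (if bψ.1 ∈ Be then (A : ℝ) ^ (A : ℕ) else (A : ℝ)) *
        Real.exp (η * ∑ s ∈ Finset.Icc 1 t,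
          (Real.exp (-η * Lbar) * (wb bψ.1 * M s bψ.1) * ip (p s ω) (ℓt s bψ.1 ω)
            - (wb bψ.1 * M s bψ.1) * ip (pushf bψ.2 (p s ω)) (ℓt s bψ.1 ω))))
    (hstat : ∀ t ∈ Finset.Icc 1 T, ∀ᵐ ω ∂μ, ∀ a : Fin A,
      ∑ bψ ∈ ℐ, W (t - 1) ω bψ * (wb bψ.1 * M t bψ.1) * p t ω a
        = ∑ bψ ∈ ℐ, W (t - 1) ω bψ * (wb bψ.1 * M t bψ.1) * pushf bψ.2 (p t ω) a) :
    ENNReal.ofReal (1 - pdag) ≤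
      μ {ω | ∀ b ∈ Bs, ∀ ψ : Fin A → Fin A,
        ∑ t ∈ Finset.Icc 1 T,
            M t b * (ip (p t ω) (ℓt t b ω) - ip (pushf ψ (p t ω)) (ℓt t b ω))
          ≤ η * Lbar * ∑ t ∈ Finset.Icc 1 T, M t b * ip (p t ω) (ℓt t b ω)
            + Real.log (((Bs.card : ℝ) + (Be.card : ℝ)) * (A : ℝ) ^ (A : ℕ) / pdag)
              / (η * wb b)} := by
  have hsubI : ∀ i ∈ ℐ, i.1 ∈ Bs ∪ Be := by
    intro i hi
    rw [hℐ, Finset.mem_union, Finset.mem_product, Finset.mem_product] at hi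
    exact Finset.mem_union.mpr (hi.imp And.left And.left)
  have hA1 : (1 : ℝ) ≤ A := by exact_mod_cast hA
  have hA0 : (0 : ℝ) < A := by linarith
  have hf0 : ∀ t ∈ Finset.Icc 1 T, ∀ i ∈ ℐ, ∀ a, ∀ᵐ ω ∂μ,
      0 ≤ (wb i.1 * M t i.1) * ℓt t i.1 ω a ∧ (wb i.1 * M t i.1) * ℓt t i.1 ω a ≤ Lbar := by
    intro t ht i hi a
    filter_upwards [hbd t ht i.1 (hsubI i hi) a] with ω hω
    exact ⟨mul_nonneg (mul_nonneg (hwb _ (hsubI i hi)).le (hM t ht _ (hsubI i hi)))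
      (hℓtnonneg t ht _ (hsubI i hi) ω a), hω⟩
  have hWmeas : ∀ t ≤ T, ∀ i ∈ ℐ, Measurable[𝔉 t] (fun ω => W t ω i) := by
    intro t ht i hi
    simp only [hW]
    refine Measurable.const_mul (Real.measurable_exp.comp (Measurable.const_mul ?_ _)) _
    refine Finset.measurable_fun_sum _ fun s hs => ?_
    have hs' := Finset.mem_Icc.mp hs
    have hsT : s ∈ Finset.Icc 1 T := Finset.mem_Icc.mpr ⟨hs'.1, hs'.2.trans ht⟩
    have hp' : ∀ a, Measurable[𝔉 t] fun ω => p s ω a := fun a =>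
      (hpmeas s hsT a).mono (𝔉.mono (by omega)) le_rfl
    have hl' : ∀ a, Measurable[𝔉 t] fun ω => ℓt s i.1 ω a := fun a =>
      (hℓtmeas s hsT _ (hsubI i hi) a).mono (𝔉.mono hs'.2) le_rfl
    refine Measurable.sub (Measurable.const_mul ?_ _) (Measurable.const_mul ?_ _)
    · exact Finset.measurable_fun_sum _ fun a _ => (hp' a).mul (hl' a)
    · simp only [ip_pushf]
      exact Finset.measurable_fun_sum _ fun a _ => (hp' a).mul (hl' _)
  have hW0 : ∀ t ω i, 0 ≤ W t ω i := by
    intro t ω i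
    rw [hW]
    refine mul_nonneg ?_ (Real.exp_pos _).le
    split_ifs <;> positivity
  have hWsucc : ∀ t ω i, W (t + 1) ω i = W t ω i * Real.exp (η * (Real.exp (-η * Lbar) *
      ip (p (t + 1) ω) (fun a => (wb i.1 * M (t + 1) i.1) * ℓt (t + 1) i.1 ω a)
      - ip (pushf i.2 (p (t + 1) ω))
        (fun a => (wb i.1 * M (t + 1) i.1) * ℓt (t + 1) i.1 ω a))) := by
    intro t ω i
    rw [hW, hW, Finset.sum_Icc_succ_top (by omega), mul_add, Real.exp_add, ip_smul, ip_smul]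
    ring_nf
  -- One round multiplies a weight by at most `exp (η L̄)`.
  have hWbd : ∀ t ≤ T, ∀ i ∈ ℐ, ∀ᵐ ω ∂μ,
      0 ≤ W t ω i ∧ W t ω i ≤ ((A : ℝ) ^ A + A) * Real.exp (η * Lbar) ^ t := by
    intro t
    induction t with
    | zero =>
      intro _ i _
      refine Filter.Eventually.of_forall fun ω => ⟨hW0 _ _ _, ?_⟩
      rw [hW]
      have : (0 : ℝ) < (A : ℝ) ^ A := by positivity
      split_ifs <;> simp
    | succ t ih =>
      intro ht i hi
      have htm : t + 1 ∈ Finset.Icc 1 T := Finset.mem_Icc.mpr ⟨by omega, ht⟩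
      filter_upwards [ih (by omega) i hi, ae_all_iff.mpr (hf0 (t + 1) htm i hi)] with ω h1 h2
      refine ⟨hW0 _ _ _, ?_⟩
      rw [hWsucc, pow_succ, ← mul_assoc]
      refine mul_le_mul h1.2 (Real.exp_le_exp.mpr ?_) (Real.exp_pos _).le (h1.1.trans h1.2)
      have hx := avg_mem_Icc (hpprob _ htm ω) (fun a => (h2 a).1) (fun a => (h2 a).2) id
      have hy := avg_mem_Icc (hpprob _ htm ω) (fun a => (h2 a).1) (fun a => (h2 a).2) i.2
      rw [pushf_id] at hx
      have hβ1 : Real.exp (-η * Lbar) ≤ 1 := Real.exp_le_one_iff.mpr (by nlinarith)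
      refine mul_le_mul_of_nonneg_left ?_ hη.le
      have := mul_le_mul_of_nonneg_right hβ1 hx.1
      linarith [hx.2, hy.1]
  have hWint : ∀ t ≤ T, ∀ i ∈ ℐ, Integrable (fun ω => W t ω i) μ := fun t ht i hi =>
    integrable_of_ae_mem_Icc ((hWmeas t ht i hi).mono (𝔉.le t) le_rfl) (hWbd t ht i hi)
  set N : ℝ := (Bs.card : ℝ) + (Be.card : ℝ) with hN
  have hN0 : 0 < N := by
    have h1 : (0 : ℝ) < Bs.card := by exact_mod_cast hBs.card_pos
    have h2 : (0 : ℝ) < Be.card := by exact_mod_cast hBe.card_pos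
    linarith
  have hPsiE : (PsiE A).card = A := by
    unfold PsiE
    rw [Finset.card_image_of_injective, Finset.card_univ, Fintype.card_fin]
    intro a b hab
    exact congrFun hab a
  have hΦ0 : ∀ ω, ∑ i ∈ ℐ, W 0 ω i = N * (A : ℝ) ^ A * A := by
    intro ω
    have hd : Disjoint (Bs ×ˢ (Finset.univ : Finset (Fin A → Fin A))) (Be ×ˢ PsiE A) :=
      Finset.disjoint_product.mpr (Or.inl hdisj)
    rw [hℐ, Finset.sum_union hd]
    have e1 : ∀ i ∈ Bs ×ˢ (Finset.univ : Finset (Fin A → Fin A)), W 0 ω i = (A : ℝ) := by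
      intro i hi
      have : i.1 ∉ Be := Finset.disjoint_left.mp hdisj (Finset.mem_product.mp hi).1
      simp [hW, this]
    have e2 : ∀ i ∈ Be ×ˢ PsiE A, W 0 ω i = (A : ℝ) ^ A := by
      intro i hi
      simp [hW, (Finset.mem_product.mp hi).1]
    rw [Finset.sum_congr rfl e1, Finset.sum_congr rfl e2, Finset.sum_const, Finset.sum_const,
      Finset.card_product, Finset.card_product, hPsiE, Finset.card_univ, Fintype.card_fun,
      Fintype.card_fin, nsmul_eq_mul, nsmul_eq_mul]
    push_cast
    rw [hN]
    ring
  have hΦ : ∀ t ≤ T, ∫ ω, ∑ i ∈ ℐ, W t ω i ∂μ ≤ N * (A : ℝ) ^ A * A := by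
    intro t
    induction t with
    | zero => intro _; simp [hΦ0]
    | succ t ih =>
      intro ht
      have htm : t + 1 ∈ Finset.Icc 1 T := Finset.mem_Icc.mpr ⟨by omega, ht⟩
      refine le_trans ?_ (ih (by omega))
      refine integral_step_le (𝔉.le t) ℐ hη hL (fun i ω => W t ω i) (fun i ω => W (t + 1) ω i)
        (hWmeas t (by omega)) (hWbd t (by omega))
        (fun i ω a => (wb i.1 * M (t + 1) i.1) * ℓt (t + 1) i.1 ω a) ?_ (hf0 (t + 1) htm)
        (p (t + 1)) (hpmeas (t + 1) htm) (hpprob (t + 1) htm) (fun i => i.2)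
        (fun i => wb i.1 * M (t + 1) i.1) (ℓ (t + 1)) ?_ (hstat (t + 1) htm)
        (fun i _ ω => hWsucc t ω i) (hWint (t + 1) ht)
      · intro i hi a
        exact ((hℓtmeas (t + 1) htm _ (hsubI i hi) a).mono (𝔉.le _) le_rfl).const_mul _
      · intro i hi a
        have h1 := condExp_smul (μ := μ) (wb i.1 * M (t + 1) i.1)
          (fun ω => ℓt (t + 1) i.1 ω a) (𝔉 t)
        filter_upwards [h1, hcond (t + 1) htm _ (hsubI i hi) a] with ω h2 h3
        refine Eq.trans h2 ?_
        rw [Pi.smul_apply, smul_eq_mul]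
        exact congrArg _ h3
  have hint : Integrable (fun ω => ∑ i ∈ ℐ, W T ω i) μ :=
    integrable_finsetSum _ (hWint T le_rfl)
  have hQ : 0 < N * (A : ℝ) ^ A * A / pdag := by
    have := hpdag.1
    positivity
  have hmarkov : μ.real {ω | N * (A : ℝ) ^ A * A / pdag ≤ ∑ i ∈ ℐ, W T ω i} ≤ pdag := by
    have h1 := mul_meas_ge_le_integral_of_nonneg (μ := μ)
      (Filter.Eventually.of_forall fun ω => Finset.sum_nonneg fun i _ => hW0 T ω i) hint
      (N * (A : ℝ) ^ A * A / pdag)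
    have h2 := h1.trans (hΦ T le_rfl)
    refine le_of_mul_le_mul_left (h2.trans (le_of_eq ?_)) hQ
    rw [div_mul_cancel₀ _ hpdag.1.ne']
  set G := {ω | ∀ b ∈ Bs, ∀ ψ : Fin A → Fin A,
        ∑ t ∈ Finset.Icc 1 T,
            M t b * (ip (p t ω) (ℓt t b ω) - ip (pushf ψ (p t ω)) (ℓt t b ω))
          ≤ η * Lbar * ∑ t ∈ Finset.Icc 1 T, M t b * ip (p t ω) (ℓt t b ω)
            + Real.log (N * (A : ℝ) ^ (A : ℕ) / pdag) / (η * wb b)} with hG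
  have hcover : Set.univ ⊆ {ω | N * (A : ℝ) ^ A * A / pdag ≤ ∑ i ∈ ℐ, W T ω i} ∪ G := by
    intro ω _
    by_cases hω : N * (A : ℝ) ^ A * A / pdag ≤ ∑ i ∈ ℐ, W T ω i
    · exact Or.inl hω
    refine Or.inr ?_
    push Not at hω
    intro b hb ψ
    have hbu : b ∈ Bs ∪ Be := Finset.mem_union_left _ hb
    have hbe : b ∉ Be := Finset.disjoint_left.mp hdisj hb
    have hmem : (b, ψ) ∈ ℐ := by
      rw [hℐ]
      exact Finset.mem_union_left _ (Finset.mem_product.mpr ⟨hb, Finset.mem_univ _⟩)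
    have h1 : W T ω (b, ψ) < N * (A : ℝ) ^ A * A / pdag :=
      (Finset.single_le_sum (fun i _ => hW0 T ω i) hmem).trans_lt hω
    rw [hW] at h1
    simp only [hbe, if_false] at h1
    set X := ∑ t ∈ Finset.Icc 1 T, M t b * ip (p t ω) (ℓt t b ω) with hX
    set Y := ∑ t ∈ Finset.Icc 1 T, M t b * ip (pushf ψ (p t ω)) (ℓt t b ω) with hY
    have hsum : ∑ s ∈ Finset.Icc 1 T,
          (Real.exp (-η * Lbar) * (wb b * M s b) * ip (p s ω) (ℓt s b ω)
            - (wb b * M s b) * ip (pushf ψ (p s ω)) (ℓt s b ω))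
        = wb b * (Real.exp (-η * Lbar) * X - Y) := by
      rw [hX, hY, Finset.mul_sum, ← Finset.sum_sub_distrib, Finset.mul_sum]
      exact Finset.sum_congr rfl fun s _ => by ring
    rw [hsum, show N * (A : ℝ) ^ A * A / pdag = A * (N * (A : ℝ) ^ A / pdag) by ring] at h1
    have h2 := lt_of_mul_lt_mul_left h1 hA0.le
    have hR : 0 < N * (A : ℝ) ^ A / pdag := by
      have := hpdag.1
      positivity
    have h3 := (Real.lt_log_iff_exp_lt hR).mpr h2
    have hηw : 0 < η * wb b := mul_pos hη (hwb b hbu)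
    have h4 : Real.exp (-η * Lbar) * X - Y
        ≤ Real.log (N * (A : ℝ) ^ A / pdag) / (η * wb b) := by
      rw [le_div_iff₀ hηw]
      linarith
    have hX0 : 0 ≤ X := by
      refine Finset.sum_nonneg fun t ht => mul_nonneg (hM t ht b hbu) ?_
      exact Finset.sum_nonneg fun a _ =>
        mul_nonneg ((hpprob t ht ω).1 a) (hℓtnonneg t ht b hbu ω a)
    have h5 : 1 - η * Lbar ≤ Real.exp (-η * Lbar) := by
      have := Real.add_one_le_exp (-η * Lbar)
      linarith
    have h6 := mul_le_mul_of_nonneg_right h5 hX0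
    have h7 : ∑ t ∈ Finset.Icc 1 T,
        M t b * (ip (p t ω) (ℓt t b ω) - ip (pushf ψ (p t ω)) (ℓt t b ω)) = X - Y := by
      rw [hX, hY, ← Finset.sum_sub_distrib]
      exact Finset.sum_congr rfl fun s _ => by ring
    rw [h7]
    linarith
  -- Subadditivity avoids having to show that the event `G` is measurable.
  have h1 : (1 : ℝ) ≤ μ.real {ω | N * (A : ℝ) ^ A * A / pdag ≤ ∑ i ∈ ℐ, W T ω i} + μ.real G := by
    rw [← probReal_univ (μ := μ)]
    exact (measureReal_mono hcover).trans (measureReal_union_le _ _)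
  refine ENNReal.ofReal_le_of_le_toReal ?_
  change 1 - pdag ≤ μ.real G
  linarith
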